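/- Let P ∈ ℂ[X₁,…,Xₙ] be a homogeneous polynomial of degree d, q ∈ ℕ, b ∈ 𝒮((ℤⁿ)^q), (ε_i)_{1≤i≤q} ∈ {−1,0,1}^q, and let Θ ∈ M_n(ℝ) be a diophantine matrix. Set 𝒵 := { l ∈ (ℤⁿ)^q : Σ_{i=1}^q ε_i l_i = 0 }. Then the function g₀(s) := Σ_{l∈(ℤⁿ)^q ∖ 𝒵} b(l) · f_{Θ Σ_{i=1}^q ε_i l_i}(s), where f_a(s) := Σ'_{k∈ℤⁿ} (P(k)/|k|^s) e^{2πi k·a}, extends holomorphically to the whole complex plane ℂ. -/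

import Mathlib

open Filter Topology

noncomputable section

/-- Euclidean norm of an integer vector `k ∈ ℤⁿ`. -/
def znorm {n : ℕ} (k : Fin n → ℤ) : ℝ := Real.sqrt (∑ i, ((k i : ℝ)) ^ 2)

/-- Schwartz (rapidly decreasing) sequences on `(ℤⁿ)^q`. -/
def IsSchwartzSeq {q n : ℕ} (b : (Fin q → Fin n → ℤ) → ℂ) : Prop :=
  ∀ r : ℕ, ∃ C : ℝ, ∀ l : Fin q → Fin n → ℤ,
    (1 + ∑ i, ∑ a, ((l i a : ℝ)) ^ 2) ^ r * ‖b l‖ ^ 2 ≤ C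

/-- A vector `a ∈ ℝⁿ` is diophantine: for some `δ, c > 0`,
`|q·a − m| ≥ c |q|^{−δ}` for all `q ∈ ℤⁿ ∖ {0}` and all `m ∈ ℤ`. -/
def IsDiophantineVector {n : ℕ} (a : Fin n → ℝ) : Prop :=
  ∃ δ : ℝ, 0 < δ ∧ ∃ c : ℝ, 0 < c ∧ ∀ q : Fin n → ℤ, q ≠ 0 → ∀ m : ℤ,
    c * znorm q ^ (-δ) ≤ |(∑ i, (q i : ℝ) * a i) - (m : ℝ)|

/-- A matrix `Θ ∈ Mₙ(ℝ)` is diophantine if `ᵗΘ(u)` is a diophantine vector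
for some `u ∈ ℤⁿ`. -/
def IsDiophantineMatrix {n : ℕ} (Θ : Matrix (Fin n) (Fin n) ℝ) : Prop :=
  ∃ u : Fin n → ℤ, IsDiophantineVector (Θ.transpose.mulVec fun i => (u i : ℝ))

/-- Term of the twisted series `f_a(s) = Σ'_{k∈ℤⁿ} (P(k)/|k|^s) e^{2πi k·a}`. -/
def fTerm {n : ℕ} (P : MvPolynomial (Fin n) ℂ) (a : Fin n → ℝ) (s : ℂ) (k : Fin n → ℤ) : ℂ :=
  if k = 0 then 0 else
    MvPolynomial.eval (fun i => ((k i : ℤ) : ℂ)) P / ((znorm k : ℂ) ^ s) *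
      Complex.exp (2 * (Real.pi : ℂ) * Complex.I * ((∑ i, (k i : ℝ) * a i : ℝ) : ℂ))

/-!
Let `u ∈ ℤⁿ` and `χ(k) = e^{2πi k·a}`. Summation by parts along `u` multiplies `f_a` by the constant
`χ(-u) - 1` and replaces the summand `P(k) / |k|ˢ` by its forward difference. The summand extends
holomorphically to a complex cone around `ℝⁿ ∖ {0}`, so by Cauchy's estimates each difference gains
a factor `|k|⁻¹`, and `N` summations by parts continue `f_a` to `re s > deg P + n - N`. If `ᵗΘ(u)`
is diophantine and `a = Θ m` with `m = ∑ εᵢ lᵢ ≠ 0`, the price `|χ(-u) - 1|⁻ᴺ` is polynomial in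
`|m|`, hence is absorbed by the decay of `b`.
-/

section ForwardDifferences

open fwdDiff Metric

theorem fwdDiff_iter_congr {M M' G : Type*} [AddCommMonoid M] [AddCommMonoid M'] [AddCommGroup G]
    {f : M → G} {g : M' → G} {x h : M} {x' h' : M'} {N : ℕ}
    (H : ∀ j ≤ N, f (x + j • h) = g (x' + j • h')) : (Δ_[h])^[N] f x = (Δ_[h'])^[N] g x' := by
  simp only [fwdDiff_iter_eq_sum_shift]
  refine Finset.sum_congr rfl fun j hj ↦ ?_
  rw [H j (Finset.mem_range_succ_iff.mp hj)]

variable {E F : Type*} [NormedAddCommGroup E] [NormedSpace ℂ E]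
  [NormedAddCommGroup F] [NormedSpace ℂ F] {f : E → F} {x h : E} {R M τ : ℝ}

theorem norm_fwdDiff_le_of_forall_mem_ball (hτ : 0 < τ) (hf : DifferentiableOn ℂ f (ball x R))
    (hM : ∀ w ∈ ball x R, ‖f w‖ ≤ M) {z : E} (hz : z ∈ ball x (R - (1 + τ) * ‖h‖)) :
    ‖Δ_[h] f z‖ ≤ M / τ := by
  have line_mem : ∀ t : ℂ, ‖t‖ ≤ 1 + τ → z + t • h ∈ ball x R := by
    intro t ht
    rw [mem_ball_iff_norm] at hz ⊢
    calc ‖z + t • h - x‖ = ‖(z - x) + t • h‖ := by rw [add_sub_right_comm]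
      _ ≤ ‖z - x‖ + ‖t‖ * ‖h‖ := (norm_add_le _ _).trans_eq (by rw [norm_smul])
      _ ≤ ‖z - x‖ + (1 + τ) * ‖h‖ := by gcongr
      _ < R := by linarith
  set g : ℂ → F := fun t ↦ f (z + t • h) with g_def
  have g_diff : ∀ t : ℂ, ‖t‖ ≤ 1 + τ → DifferentiableAt ℂ g t := fun t ht ↦
    (hf.differentiableAt (isOpen_ball.mem_nhds (line_mem t ht))).comp t (by fun_prop)
  have disc_le : ∀ t ∈ closedBall (0 : ℂ) 1, ∀ w ∈ closedBall t τ, ‖w‖ ≤ 1 + τ := by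
    intro t ht w hw
    rw [mem_closedBall_zero_iff] at ht
    rw [mem_closedBall_iff_norm] at hw
    linarith [norm_le_norm_add_norm_sub' w t]
  have deriv_le : ∀ t ∈ closedBall (0 : ℂ) 1, ‖deriv g t‖ ≤ M / τ := by
    intro t ht
    refine Complex.norm_deriv_le_of_forall_mem_sphere_norm_le hτ ?_ fun w hw ↦
      hM _ (line_mem w (disc_le t ht w (sphere_subset_closedBall hw)))
    exact DifferentiableOn.diffContOnCl_ball (U := closedBall t τ)
      (fun w hw ↦ (g_diff w (disc_le t ht w hw)).differentiableWithinAt) subset_rfl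
  have mvt := (convex_closedBall (0 : ℂ) 1).norm_image_sub_le_of_norm_deriv_le
    (fun t ht ↦ g_diff t (by linarith [mem_closedBall_zero_iff.mp ht])) deriv_le
    (x := 0) (y := 1) (by simp) (by simp)
  simpa [g_def, fwdDiff] using mvt

theorem norm_fwdDiff_iter_le_of_forall_mem_ball (hτ : 0 < τ) (N : ℕ)
    (hf : DifferentiableOn ℂ f (ball x R)) (hM : ∀ w ∈ ball x R, ‖f w‖ ≤ M) :
    ∀ z ∈ ball x (R - N * ((1 + τ) * ‖h‖)), ‖(Δ_[h])^[N] f z‖ ≤ M / τ ^ N := by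
  induction N generalizing f R M with
  | zero => simpa using hM
  | succ N ih =>
    intro z hz
    have shrink : ball x (R - (1 + τ) * ‖h‖) ⊆ ball x R := ball_subset_ball (by
      linarith [show 0 ≤ (1 + τ) * ‖h‖ by positivity])
    have shift_mem : Set.MapsTo (· + h) (ball x (R - (1 + τ) * ‖h‖)) (ball x R) := by
      intro w hw
      rw [mem_ball_iff_norm] at hw ⊢
      calc ‖w + h - x‖ = ‖(w - x) + h‖ := by rw [add_sub_right_comm]
        _ ≤ ‖w - x‖ + ‖h‖ := norm_add_le _ _
        _ < R := by nlinarith [mul_nonneg hτ.le (norm_nonneg h)]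
    rw [Function.iterate_succ_apply, pow_succ', ← div_div]
    refine ih (f := Δ_[h] f) (R := R - (1 + τ) * ‖h‖) ?_
      (fun w hw ↦ norm_fwdDiff_le_of_forall_mem_ball hτ hf hM hw) z ?_
    · exact (hf.comp (by fun_prop) shift_mem).sub (hf.mono shrink)
    · convert hz using 2
      push_cast
      ring

end ForwardDifferences

section SummationByParts

open fwdDiff

theorem tsum_fwdDiff_mul_addChar {G A : Type*} [AddCommGroup G] [CommRing A] [TopologicalSpace A]
    [IsTopologicalRing A] [T2Space A] (χ : AddChar G A) {f : G → A}
    (hf : Summable fun k ↦ f k * χ k) (u : G) :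
    ∑' k, Δ_[u] f k * χ k = (χ (-u) - 1) * ∑' k, f k * χ k := by
  have shift : (fun k ↦ f (k + u) * χ k) =
      (fun k ↦ χ (-u) * (f k * χ k)) ∘ Equiv.addRight u := by
    funext k
    have : χ k = χ (-u) * χ (k + u) := by rw [← AddChar.map_add_eq_mul, neg_add_cancel_comm_assoc]
    simp only [Function.comp_apply, Equiv.coe_addRight, this]
    ring
  have hf_shift : Summable fun k ↦ f (k + u) * χ k := by
    rw [shift]
    exact (Equiv.summable_iff _).mpr (hf.mul_left _)
  calc ∑' k, Δ_[u] f k * χ k = ∑' k, (f (k + u) * χ k - f k * χ k) := by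
        simp only [fwdDiff, sub_mul]
    _ = ∑' k, χ (-u) * (f k * χ k) - ∑' k, f k * χ k := by
        rw [hf_shift.tsum_sub hf, shift]
        exact congrArg (· - _) ((Equiv.addRight u).tsum_eq fun k ↦ χ (-u) * (f k * χ k))
    _ = (χ (-u) - 1) * ∑' k, f k * χ k := by
        rw [hf.tsum_mul_left, sub_mul, one_mul]

end SummationByParts

theorem exists_summable_forall_le_of_eventually_cofinite {α β : Type*} {S : Set β}
    {F : α → β → ℝ} {v : α → ℝ} (hv : Summable v) (hF : ∀ k, BddAbove (F k '' S))
    (hFv : ∀ᶠ k in cofinite, ∀ s ∈ S, F k s ≤ v k) :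
    ∃ w : α → ℝ, Summable w ∧ ∀ k, ∀ s ∈ S, F k s ≤ w k := by
  classical
  choose B hB using hF
  refine ⟨fun k ↦ if ∀ s ∈ S, F k s ≤ v k then v k else B k, ?_, fun k s hs ↦ ?_⟩
  · refine hv.congr_cofinite ?_
    filter_upwards [hFv] with k hk
    rw [if_pos hk]
  · dsimp only
    split_ifs with h
    · exact h s hs
    · exact hB k (Set.mem_image_of_mem _ hs)

theorem exists_differentiable_eqOn_of_eqOn_succ {𝕜 E F : Type*} [NontriviallyNormedField 𝕜]
    [NormedAddCommGroup E] [NormedSpace 𝕜 E] [NormedAddCommGroup F] [NormedSpace 𝕜 F]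
    {U : ℕ → Set E} (hU : Monotone U) (hU_open : ∀ N, IsOpen (U N)) (hU_cover : ⋃ N, U N = Set.univ)
    {H : ℕ → E → F} (hH : ∀ N, DifferentiableOn 𝕜 (H N) (U N))
    (hH_succ : ∀ N, Set.EqOn (H (N + 1)) (H N) (U N)) :
    ∃ g : E → F, Differentiable 𝕜 g ∧ ∀ N, Set.EqOn g (H N) (U N) := by
  have eqOn_of_le : ∀ {N N'}, N ≤ N' → Set.EqOn (H N') (H N) (U N) := by
    intro N N' hN
    induction N', hN using Nat.le_induction with
    | base => exact fun _ _ ↦ rfl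
    | succ N' hN' ih => exact ((hH_succ N').mono (hU hN')).trans ih
  have compatible : ∀ N N' x, x ∈ U N → x ∈ U N' → H N x = H N' x := by
    intro N N' x hx hx'
    rcases le_total N N' with h | h
    · exact (eqOn_of_le h hx).symm
    · exact eqOn_of_le h hx'
  set g := Set.liftCover U (fun N x ↦ H N x) compatible hU_cover
  have g_eqOn : ∀ N, Set.EqOn g (H N) (U N) := fun N x hx ↦ Set.liftCover_of_mem hx
  refine ⟨g, fun x ↦ ?_, g_eqOn⟩
  obtain ⟨N, hN⟩ := Set.mem_iUnion.mp (hU_cover ▸ Set.mem_univ x)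
  have hN_nhds := (hU_open N).mem_nhds hN
  exact ((hH N).differentiableAt hN_nhds).congr_of_eventuallyEq
    ((g_eqOn N).eventuallyEq_of_mem hN_nhds)

section IntegerVectors

theorem summable_norm_rpow_pi_int (ι : Type*) [Fintype ι] {r : ℝ} (hr : r < -Fintype.card ι) :
    Summable fun k : ι → ℤ ↦ ‖k‖ ^ r := by
  let L : Submodule ℤ (ι → ℝ) := Submodule.span ℤ (Set.range (Pi.basisFun ℝ ι))
  have rank_L : Module.finrank ℤ L = Fintype.card ι := by simp [ZLattice.rank ℝ L]
  have cast_mem (k : ι → ℤ) : (fun i ↦ (k i : ℝ)) ∈ L :=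
    ((Pi.basisFun ℝ ι).mem_span_iff_repr_mem ℤ _).mpr fun i ↦ ⟨k i, by simp⟩
  have cast_injective : Function.Injective fun k ↦ (⟨_, cast_mem k⟩ : L) := fun k k' h ↦
    funext fun i ↦ Int.cast_injective (congrFun (congrArg Subtype.val h) i)
  have summable_L := ZLattice.summable_norm_rpow L r (by rwa [rank_L])
  have norm_cast_eq (k : ι → ℤ) : ‖(⟨_, cast_mem k⟩ : L)‖ = ‖k‖ := rfl
  refine (summable_L.comp_injective cast_injective).congr fun k ↦ ?_
  rw [Function.comp_apply, norm_cast_eq]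

theorem norm_curry {ι κ E : Type*} [Fintype ι] [Fintype κ] [SeminormedAddCommGroup E]
    (x : ι × κ → E) : ‖Function.curry x‖ = ‖x‖ := by
  simp only [Pi.norm_def, Pi.nnnorm_def, ← Finset.univ_product_univ, Finset.sup_product_left,
    Function.curry_apply]

theorem summable_norm_rpow_pi_pi_int (ι κ : Type*) [Fintype ι] [Fintype κ] {r : ℝ}
    (hr : r < -(Fintype.card ι * Fintype.card κ)) : Summable fun l : ι → κ → ℤ ↦ ‖l‖ ^ r := by
  rw [← (Equiv.curry ι κ ℤ).summable_iff]
  have h := summable_norm_rpow_pi_int (ι × κ) (r := r) (by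
    rwa [Fintype.card_prod, Nat.cast_mul])
  exact h.congr fun x ↦ by simp only [Function.comp_apply, Equiv.curry_apply, norm_curry]

theorem one_le_norm_pi_int {ι : Type*} [Fintype ι] {k : ι → ℤ} (hk : k ≠ 0) : 1 ≤ ‖k‖ := by
  obtain ⟨i, hi⟩ := Function.ne_iff.mp hk
  refine le_trans ?_ (norm_le_pi_norm k i)
  rw [Int.norm_eq_abs]
  exact_mod_cast Int.one_le_abs hi

/-- The inclusion `ℤⁿ ⊆ ℂⁿ`, with the Euclidean norm on `ℂⁿ`. -/
def latticePoint {n : ℕ} : (Fin n → ℤ) →+ EuclideanSpace ℂ (Fin n) where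
  toFun k := WithLp.toLp 2 fun i ↦ (k i : ℂ)
  map_zero' := by ext; simp
  map_add' k k' := by ext; simp

variable {n : ℕ}

@[simp]
theorem latticePoint_apply (k : Fin n → ℤ) (i : Fin n) : latticePoint k i = k i := rfl

theorem znorm_nonneg (k : Fin n → ℤ) : 0 ≤ znorm k := Real.sqrt_nonneg _

theorem norm_latticePoint (k : Fin n → ℤ) : ‖latticePoint k‖ = znorm k := by
  simp [EuclideanSpace.norm_eq, znorm, Complex.norm_intCast]

theorem sum_sq_latticePoint (k : Fin n → ℤ) :
    ∑ i, latticePoint k i ^ 2 = ((znorm k ^ 2 : ℝ) : ℂ) := by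
  rw [znorm, Real.sq_sqrt (by positivity)]
  push_cast
  rfl

theorem norm_le_znorm (k : Fin n → ℤ) : ‖k‖ ≤ znorm k := by
  refine (pi_norm_le_iff_of_nonneg (znorm_nonneg k)).mpr fun i ↦ ?_
  simpa [norm_latticePoint, Complex.norm_intCast, Int.norm_eq_abs]
    using PiLp.norm_apply_le (latticePoint k) i

theorem znorm_le_sqrt_mul_norm (k : Fin n → ℤ) : znorm k ≤ √n * ‖k‖ := by
  rw [znorm, Real.sqrt_le_left (by positivity), mul_pow, Real.sq_sqrt (Nat.cast_nonneg n)]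
  calc ∑ i, (k i : ℝ) ^ 2 ≤ ∑ _i : Fin n, ‖k‖ ^ 2 := by
        gcongr ∑ _, ?_ with i
        rw [← sq_abs, ← Int.norm_eq_abs]
        gcongr
        exact norm_le_pi_norm k i
    _ = n * ‖k‖ ^ 2 := by simp

theorem one_le_znorm {k : Fin n → ℤ} (hk : k ≠ 0) : 1 ≤ znorm k :=
  (one_le_norm_pi_int hk).trans (norm_le_znorm k)

theorem znorm_sum_smul_le {ι : Type*} [Fintype ι] (ε : ι → ℤ) (l : ι → Fin n → ℤ) :
    znorm (∑ i, ε i • l i) ≤ (∑ i, |(ε i : ℝ)|) * √n * ‖l‖ := by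
  rw [← norm_latticePoint, map_sum, mul_assoc, Finset.sum_mul]
  refine norm_sum_le_of_le _ fun i _ ↦ ?_
  rw [map_zsmul]
  calc ‖ε i • latticePoint (l i)‖ ≤ |(ε i : ℝ)| * ‖latticePoint (l i)‖ := by
        rw [← Int.norm_eq_abs]
        exact norm_zsmul_le _ _
    _ ≤ |(ε i : ℝ)| * (√n * ‖l‖) := by
        rw [norm_latticePoint]
        gcongr
        exact (znorm_le_sqrt_mul_norm _).trans (by gcongr; exact norm_le_pi_norm l i)

theorem finite_setOf_znorm_lt (A : ℝ) : {k : Fin n → ℤ | znorm k < A}.Finite :=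
  (isCompact_closedBall (0 : Fin n → ℤ) A).finite_of_discrete.subset fun k hk ↦
    mem_closedBall_zero_iff.mpr ((norm_le_znorm k).trans (le_of_lt hk))

theorem summable_znorm_rpow {r : ℝ} (hr : r < -n) :
    Summable fun k : Fin n → ℤ ↦ znorm k ^ r := by
  refine (summable_norm_rpow_pi_int (Fin n) (r := r) (by simpa using hr)).of_norm_bounded_eventually
    ?_
  filter_upwards [eventually_cofinite_ne 0] with k hk
  have hk_pos : 0 < ‖k‖ := norm_pos_iff.mpr hk
  rw [Real.norm_of_nonneg (Real.rpow_nonneg (znorm_nonneg k) r)]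
  exact Real.rpow_le_rpow_of_nonpos hk_pos (norm_le_znorm k)
    (hr.le.trans (neg_nonpos.mpr n.cast_nonneg))

end IntegerVectors

section SchwartzSequences

variable {q n : ℕ} {b : (Fin q → Fin n → ℤ) → ℂ}

theorem norm_sq_le_sum_sum_sq {ι κ : Type*} [Fintype ι] [Fintype κ] (l : ι → κ → ℤ) :
    ‖l‖ ^ 2 ≤ ∑ i, ∑ a, (l i a : ℝ) ^ 2 := by
  have norm_le : ‖l‖ ≤ √(∑ i, ∑ a, (l i a : ℝ) ^ 2) := by
    refine (pi_norm_le_iff_of_nonneg (Real.sqrt_nonneg _)).mpr fun i ↦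
      (pi_norm_le_iff_of_nonneg (Real.sqrt_nonneg _)).mpr fun a ↦ ?_
    rw [Int.norm_eq_abs]
    refine Real.abs_le_sqrt ?_
    calc (l i a : ℝ) ^ 2 ≤ ∑ a, (l i a : ℝ) ^ 2 :=
          Finset.single_le_sum (f := fun a ↦ (l i a : ℝ) ^ 2) (fun _ _ ↦ sq_nonneg _)
            (Finset.mem_univ a)
      _ ≤ ∑ i, ∑ a, (l i a : ℝ) ^ 2 :=
          Finset.single_le_sum (f := fun i ↦ ∑ a, (l i a : ℝ) ^ 2)
            (fun _ _ ↦ Finset.sum_nonneg fun _ _ ↦ sq_nonneg _) (Finset.mem_univ i)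
  exact (Real.le_sqrt (norm_nonneg l) (by positivity)).mp norm_le

theorem IsSchwartzSeq.exists_norm_mul_norm_pow_le (hb : IsSchwartzSeq b) (m : ℕ) :
    ∃ C, ∀ l, ‖b l‖ * ‖l‖ ^ m ≤ C := by
  obtain ⟨C, hC⟩ := hb m
  refine ⟨√C, fun l ↦ Real.le_sqrt_of_sq_le ?_⟩
  calc (‖b l‖ * ‖l‖ ^ m) ^ 2 = (‖l‖ ^ 2) ^ m * ‖b l‖ ^ 2 := by ring
    _ ≤ (1 + ∑ i, ∑ a, (l i a : ℝ) ^ 2) ^ m * ‖b l‖ ^ 2 := by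
        gcongr
        linarith [norm_sq_le_sum_sum_sq l]
    _ ≤ C := hC l

theorem IsSchwartzSeq.summable_norm_mul_norm_rpow (hb : IsSchwartzSeq b) (r : ℝ) :
    Summable fun l ↦ ‖b l‖ * ‖l‖ ^ r := by
  obtain ⟨m, hm⟩ := exists_nat_gt (r + q * n)
  obtain ⟨C, hC⟩ := hb.exists_norm_mul_norm_pow_le m
  have h_summable := summable_norm_rpow_pi_pi_int (Fin q) (Fin n) (r := r - m) (by
    simp only [Fintype.card_fin]; linarith)
  refine (h_summable.mul_left C).of_norm_bounded_eventually ?_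
  filter_upwards [eventually_cofinite_ne 0] with l hl
  have hl_pos : 0 < ‖l‖ := norm_pos_iff.mpr hl
  calc ‖‖b l‖ * ‖l‖ ^ r‖ = ‖b l‖ * ‖l‖ ^ m * ‖l‖ ^ (r - m) := by
        rw [Real.norm_of_nonneg (by positivity), Real.rpow_sub_natCast hl_pos.ne']
        field_simp
    _ ≤ C * ‖l‖ ^ (r - m) := by gcongr; exact hC l

theorem IsSchwartzSeq.summable_norm_mul_znorm_rpow (hb : IsSchwartzSeq b) (ε : Fin q → ℤ) {r : ℝ}
    (hr : 0 ≤ r) : Summable fun l ↦ ‖b l‖ * znorm (∑ i, ε i • l i) ^ r := by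
  set D := (∑ i, |(ε i : ℝ)|) * √n
  refine ((hb.summable_norm_mul_norm_rpow r).mul_left (D ^ r)).of_nonneg_of_le
    (fun l ↦ mul_nonneg (norm_nonneg _) (Real.rpow_nonneg (znorm_nonneg _) r)) fun l ↦ ?_
  calc ‖b l‖ * znorm (∑ i, ε i • l i) ^ r ≤ ‖b l‖ * (D * ‖l‖) ^ r := by
        gcongr
        · exact znorm_nonneg _
        · exact znorm_sum_smul_le ε l
    _ = D ^ r * (‖b l‖ * ‖l‖ ^ r) := by
        rw [Real.mul_rpow (by positivity) (norm_nonneg l)]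
        ring

end SchwartzSequences

section ComplexEstimates

theorem norm_eval_le_mul_pow_totalDegree {σ 𝕜 : Type*} [NormedField 𝕜] (P : MvPolynomial σ 𝕜)
    {x : σ → 𝕜} {A : ℝ} (hA : 1 ≤ A) (hx : ∀ i, ‖x i‖ ≤ A) :
    ‖MvPolynomial.eval x P‖ ≤ (∑ m ∈ P.support, ‖P.coeff m‖) * A ^ P.totalDegree := by
  rw [MvPolynomial.eval_eq, Finset.sum_mul]
  refine norm_sum_le_of_le _ fun m hm ↦ ?_
  calc ‖P.coeff m * ∏ i ∈ m.support, x i ^ m i‖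
      = ‖P.coeff m‖ * ∏ i ∈ m.support, ‖x i‖ ^ m i := by
        simp only [norm_mul, norm_prod, norm_pow]
    _ ≤ ‖P.coeff m‖ * ∏ i ∈ m.support, A ^ m i := by gcongr; exact hx _
    _ = ‖P.coeff m‖ * A ^ (m.sum fun _ e ↦ e) := by rw [Finset.prod_pow_eq_pow_sum, Finsupp.sum]
    _ ≤ ‖P.coeff m‖ * A ^ P.totalDegree := by gcongr; exact MvPolynomial.le_totalDegree hm

theorem norm_sum_mul_le_norm_mul_norm {ι 𝕜 : Type*} [Fintype ι] [RCLike 𝕜]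
    (x y : EuclideanSpace 𝕜 ι) : ‖∑ i, x i * y i‖ ≤ ‖x‖ * ‖y‖ :=
  calc ‖∑ i, x i * y i‖ ≤ ∑ i, ‖x i‖ * ‖y i‖ := norm_sum_le_of_le _ fun i _ ↦ norm_mul_le _ _
    _ ≤ ‖x‖ * ‖y‖ := by
      simpa only [EuclideanSpace.norm_eq] using Real.sum_mul_le_sqrt_mul_sqrt _ _ _

theorem norm_sum_sq_sub_sum_sq_le {ι 𝕜 : Type*} [Fintype ι] [RCLike 𝕜]
    (x y : EuclideanSpace 𝕜 ι) :
    ‖∑ i, x i ^ 2 - ∑ i, y i ^ 2‖ ≤ ‖x - y‖ * (‖x - y‖ + 2 * ‖y‖) := by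
  calc ‖∑ i, x i ^ 2 - ∑ i, y i ^ 2‖ = ‖∑ i, (x - y) i * (x + y) i‖ := by
        rw [← Finset.sum_sub_distrib]
        congr! 2 with i
        simp only [PiLp.sub_apply, PiLp.add_apply]
        ring
    _ ≤ ‖x - y‖ * ‖(x - y) + (2 : 𝕜) • y‖ := by
        rw [two_smul, sub_add_add_cancel]
        exact norm_sum_mul_le_norm_mul_norm _ _
    _ ≤ ‖x - y‖ * (‖x - y‖ + 2 * ‖y‖) := by
        gcongr
        exact (norm_add_le _ _).trans_eq (by rw [norm_smul, RCLike.norm_two])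

variable {t : ℝ} {z : ℂ}

theorem exists_eq_mul_one_add_of_norm_sub_ofReal_le (ht : 0 < t) (hz : ‖z - t‖ ≤ 3 / 4 * t) :
    ∃ v : ℂ, ‖v‖ ≤ 3 / 4 ∧ z = t * (1 + v) := by
  have ht' : (t : ℂ) ≠ 0 := Complex.ofReal_ne_zero.mpr ht.ne'
  refine ⟨(z - t) / t, ?_, by field_simp; ring⟩
  rwa [norm_div, Complex.norm_of_nonneg ht.le, div_le_iff₀ ht]

theorem mem_slitPlane_of_norm_sub_ofReal_le (ht : 0 < t) (hz : ‖z - t‖ ≤ 3 / 4 * t) :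
    z ∈ Complex.slitPlane := by
  obtain ⟨v, hv, rfl⟩ := exists_eq_mul_one_add_of_norm_sub_ofReal_le ht hz
  rw [Complex.mem_slitPlane_iff_arg, Complex.arg_real_mul _ ht]
  have := Complex.mem_slitPlane_of_norm_lt_one (z := v) (by linarith)
  exact ⟨Complex.slitPlane_arg_ne_pi this, mul_ne_zero (by exact_mod_cast ht.ne')
    (Complex.slitPlane_ne_zero this)⟩

theorem norm_log_one_add_le_two {v : ℂ} (hv : ‖v‖ ≤ 3 / 4) : ‖Complex.log (1 + v)‖ ≤ 2 := by
  have one_sub_pos : 0 < 1 - ‖v‖ := by linarith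
  calc ‖Complex.log (1 + v)‖ ≤ ‖v‖ ^ 2 * (1 - ‖v‖)⁻¹ / 2 + ‖v‖ :=
        Complex.norm_log_one_add_le (by linarith)
    _ ≤ (3 / 4) ^ 2 * (1 - 3 / 4)⁻¹ / 2 + 3 / 4 := by gcongr
    _ ≤ 2 := by norm_num

theorem norm_cpow_le_of_norm_sub_ofReal_le (ht : 0 < t) (hz : ‖z - t‖ ≤ 3 / 4 * t) (a : ℂ) :
    ‖z ^ a‖ ≤ Real.exp (2 * ‖a‖) * t ^ a.re := by
  have hz_ne := Complex.slitPlane_ne_zero (mem_slitPlane_of_norm_sub_ofReal_le ht hz)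
  obtain ⟨v, hv, rfl⟩ := exists_eq_mul_one_add_of_norm_sub_ofReal_le ht hz
  have log_eq := Complex.log_ofReal_mul ht (right_ne_zero_of_mul hz_ne)
  have re_le : (Complex.log (1 + v) * a).re ≤ 2 * ‖a‖ :=
    calc (Complex.log (1 + v) * a).re ≤ ‖Complex.log (1 + v) * a‖ := Complex.re_le_norm _
      _ ≤ 2 * ‖a‖ := by rw [norm_mul]; gcongr; exact norm_log_one_add_le_two hv
  rw [Complex.cpow_def_of_ne_zero hz_ne, log_eq, Complex.norm_exp, add_mul, Complex.add_re,
    Complex.re_ofReal_mul, Real.rpow_def_of_pos ht, ← Real.exp_add]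
  exact Real.exp_le_exp.mpr (by linarith)

end ComplexEstimates

section Summand

variable {n : ℕ} (P : MvPolynomial (Fin n) ℂ) (s : ℂ)

/-- The summand `P(k) / |k|ˢ` of the untwisted series, with value `0` at the excluded `k = 0`. -/
def summand (k : Fin n → ℤ) : ℂ :=
  if k = 0 then 0 else MvPolynomial.eval (fun i ↦ (k i : ℂ)) P / (znorm k : ℂ) ^ s

/-- The function `w ↦ P(w) (w₁² + ⋯ + wₙ²)^(-s/2)`, which extends `P(k) / |k|ˢ` holomorphically
to a complex cone around `ℝⁿ ∖ {0}`. -/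
def complexSummand (w : EuclideanSpace ℂ (Fin n)) : ℂ :=
  MvPolynomial.eval w P * (∑ i, w i ^ 2) ^ (-s / 2)

variable {P s} {k : Fin n → ℤ}

theorem summand_eq_complexSummand (hk : k ≠ 0) :
    summand P s k = complexSummand P s (latticePoint k) := by
  have pow_half : ((znorm k ^ 2 : ℝ) : ℂ) ^ (-s / 2) = (znorm k : ℂ) ^ (-s) := by
    have hk_arg : Complex.arg (znorm k : ℂ) = 0 := Complex.arg_ofReal_of_nonneg (znorm_nonneg k)
    rw [Complex.ofReal_pow, ← Complex.cpow_nat_mul']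
    · congr 1
      push_cast
      ring
    all_goals simp [hk_arg, Real.pi_pos, Real.pi_nonneg]
  rw [summand, if_neg hk, complexSummand, sum_sq_latticePoint, pow_half, Complex.cpow_neg,
    div_eq_mul_inv]
  rfl

theorem norm_sum_sq_sub_znorm_sq_le {w : EuclideanSpace ℂ (Fin n)}
    (hw : w ∈ Metric.ball (latticePoint k) (znorm k / 4)) :
    ‖∑ i, w i ^ 2 - (znorm k ^ 2 : ℝ)‖ ≤ 3 / 4 * znorm k ^ 2 := by
  have znorm_nonneg := znorm_nonneg k
  rw [mem_ball_iff_norm] at hw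
  calc ‖∑ i, w i ^ 2 - (znorm k ^ 2 : ℝ)‖
      ≤ ‖w - latticePoint k‖ * (‖w - latticePoint k‖ + 2 * znorm k) := by
        rw [← sum_sq_latticePoint, ← norm_latticePoint]
        exact norm_sum_sq_sub_sum_sq_le _ _
    _ ≤ znorm k / 4 * (znorm k / 4 + 2 * znorm k) := by gcongr
    _ ≤ 3 / 4 * znorm k ^ 2 := by linarith [sq_nonneg (znorm k)]

theorem differentiableOn_complexSummand (hk : k ≠ 0) :
    DifferentiableOn ℂ (complexSummand P s) (Metric.ball (latticePoint k) (znorm k / 4)) := by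
  have znorm_pos : 0 < znorm k := one_pos.trans_le (one_le_znorm hk)
  intro w hw
  have mem_slitPlane := mem_slitPlane_of_norm_sub_ofReal_le (pow_pos znorm_pos 2)
    (norm_sum_sq_sub_znorm_sq_le hw)
  refine DifferentiableAt.differentiableWithinAt (.mul ?_ (.cpow ?_ ?_ mem_slitPlane))
  · simp only [MvPolynomial.eval_eq]
    fun_prop
  all_goals fun_prop

theorem norm_complexSummand_le (hk : k ≠ 0) {w : EuclideanSpace ℂ (Fin n)}
    (hw : w ∈ Metric.ball (latticePoint k) (znorm k / 4)) :
    ‖complexSummand P s w‖ ≤ (∑ m ∈ P.support, ‖P.coeff m‖) * 2 ^ P.totalDegree *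
      (Real.exp ‖s‖ * znorm k ^ (P.totalDegree - s.re)) := by
  have one_le := one_le_znorm hk
  have znorm_pos : 0 < znorm k := one_pos.trans_le one_le
  have coord_le : ∀ i, ‖w i‖ ≤ 2 * znorm k := by
    intro i
    have := norm_le_norm_add_norm_sub' w (latticePoint k)
    rw [norm_latticePoint] at this
    linarith [PiLp.norm_apply_le w i, mem_ball_iff_norm.mp hw]
  have cpow_le : ‖(∑ i, w i ^ 2) ^ (-s / 2)‖ ≤ Real.exp ‖s‖ * znorm k ^ (-s.re) := by
    convert norm_cpow_le_of_norm_sub_ofReal_le (pow_pos znorm_pos 2)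
      (norm_sum_sq_sub_znorm_sq_le hw) (-s / 2) using 2
    · simp; ring
    · rw [← Real.rpow_natCast_mul znorm_pos.le]
      simp [mul_div_cancel₀]
  calc ‖complexSummand P s w‖
      ≤ (∑ m ∈ P.support, ‖P.coeff m‖) * (2 * znorm k) ^ P.totalDegree *
          (Real.exp ‖s‖ * znorm k ^ (-s.re)) := by
        rw [complexSummand, norm_mul]
        gcongr
        exact norm_eval_le_mul_pow_totalDegree P (by linarith) coord_le
    _ = _ := by
        rw [sub_eq_add_neg, Real.rpow_add znorm_pos, Real.rpow_natCast]
        ring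

end Summand

section SummandDifferences

open fwdDiff Metric

variable {n : ℕ} {P : MvPolynomial (Fin n) ℂ} {s : ℂ} {u k : Fin n → ℤ} {N : ℕ}

theorem add_nsmul_ne_zero_of_mul_znorm_lt (h : N * znorm u < znorm k) {j : ℕ} (hj : j ≤ N) :
    k + j • u ≠ 0 := by
  intro h_zero
  have znorm_eq : znorm k = j * znorm u := by
    rw [← norm_latticePoint, eq_neg_of_add_eq_zero_left h_zero, map_neg, norm_neg, map_nsmul,
      ← Nat.cast_smul_eq_nsmul ℂ, norm_smul, Complex.norm_natCast, norm_latticePoint]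
  have : j * znorm u ≤ N * znorm u := by
    have := znorm_nonneg u
    gcongr
  linarith

theorem norm_fwdDiff_iter_summand_le {L : ℝ} (hL : 8 * (N + 1) * (znorm u + 1) ≤ L)
    (hk : L ≤ znorm k) :
    ‖(Δ_[u])^[N] (summand P s) k‖ ≤ (∑ m ∈ P.support, ‖P.coeff m‖) * 2 ^ P.totalDegree * L ^ N *
      (Real.exp ‖s‖ * znorm k ^ (P.totalDegree - s.re - N)) := by
  have u_nonneg := znorm_nonneg u
  have L_pos : 0 < L := hL.trans_lt' (by positivity)
  have k_pos : 0 < znorm k := L_pos.trans_le hk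
  have mul_u_nonneg : 0 ≤ N * znorm u := by positivity
  have mul_u_lt : 8 * (N * znorm u) < L := by nlinarith [Nat.cast_nonneg (α := ℝ) N]
  have add_nsmul_ne_zero {j : ℕ} (hj : j ≤ N) : k + j • u ≠ 0 :=
    add_nsmul_ne_zero_of_mul_znorm_lt (by linarith only [mul_u_nonneg, mul_u_lt, hk]) hj
  have k_ne : k ≠ 0 := by simpa using add_nsmul_ne_zero (Nat.zero_le N)
  set τ := znorm k / L with τ_def
  have one_le_τ : 1 ≤ τ := (one_le_div L_pos).mpr hk
  have radius_pos : 0 < znorm k / 4 - N * ((1 + τ) * ‖latticePoint u‖) := by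
    rw [norm_latticePoint]
    have : znorm k = τ * L := (div_mul_cancel₀ _ L_pos.ne').symm
    nlinarith only [this, one_le_τ, mul_u_nonneg, mul_u_lt]
  calc ‖(Δ_[u])^[N] (summand P s) k‖
      = ‖(Δ_[latticePoint u])^[N] (complexSummand P s) (latticePoint k)‖ := by
        refine congrArg _ (fwdDiff_iter_congr fun j hj ↦ ?_)
        rw [summand_eq_complexSummand (add_nsmul_ne_zero hj), map_add, map_nsmul]
    _ ≤ (∑ m ∈ P.support, ‖P.coeff m‖) * 2 ^ P.totalDegree *
          (Real.exp ‖s‖ * znorm k ^ (P.totalDegree - s.re)) / τ ^ N :=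
        norm_fwdDiff_iter_le_of_forall_mem_ball (by linarith) N
          (differentiableOn_complexSummand k_ne) (fun w hw ↦ norm_complexSummand_le k_ne hw) _
          (mem_ball_self radius_pos)
    _ = _ := by
        rw [τ_def, div_pow, Real.rpow_sub_natCast k_pos.ne']
        field_simp

theorem differentiable_summand (k : Fin n → ℤ) : Differentiable ℂ fun s ↦ summand P s k := by
  unfold summand
  split_ifs with hk
  · fun_prop
  · have znorm_ne : (znorm k : ℂ) ≠ 0 :=
      Complex.ofReal_ne_zero.mpr (one_pos.trans_le (one_le_znorm hk)).ne'
    intro s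
    exact (differentiableAt_const _).div (differentiableAt_id.const_cpow (Or.inl znorm_ne))
      (by simp [Complex.cpow_eq_zero_iff, znorm_ne])

theorem differentiable_fwdDiff_iter_summand (u : Fin n → ℤ) (N : ℕ) (k : Fin n → ℤ) :
    Differentiable ℂ fun s ↦ (Δ_[u])^[N] (summand P s) k := by
  simp only [fwdDiff_iter_eq_sum_shift]
  exact Differentiable.fun_sum fun j _ ↦ (differentiable_summand _).const_smul _

theorem exists_summable_norm_fwdDiff_iter_summand_le (P : MvPolynomial (Fin n) ℂ)
    (u : Fin n → ℤ) (N : ℕ) {s₀ : ℂ} (hs₀ : P.totalDegree + n - N < s₀.re) :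
    ∃ r > 0, ∃ v : (Fin n → ℤ) → ℝ, Summable v ∧
      ∀ k, ∀ s ∈ ball s₀ r, ‖(Δ_[u])^[N] (summand P s) k‖ ≤ v k := by
  obtain ⟨σ, hσ, hσs₀⟩ := exists_between hs₀
  set L := 8 * (N + 1) * (znorm u + 1)
  set C := (∑ m ∈ P.support, ‖P.coeff m‖) * 2 ^ P.totalDegree * L ^ N
  have L_nonneg : 0 ≤ L := by have := znorm_nonneg u; positivity
  refine ⟨s₀.re - σ, sub_pos.mpr hσs₀, exists_summable_forall_le_of_eventually_cofinite
    ((summable_znorm_rpow (n := n) (r := P.totalDegree - σ - N) (by linarith)).mul_left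
      (C * Real.exp (‖s₀‖ + (s₀.re - σ)))) (fun k ↦ ?_) ?_⟩
  · exact ((isCompact_closedBall s₀ (s₀.re - σ)).bddAbove_image
      (differentiable_fwdDiff_iter_summand u N k).continuous.norm.continuousOn).mono
        (Set.image_mono ball_subset_closedBall)
  filter_upwards [(finite_setOf_znorm_lt (n := n) (max L 1)).compl_mem_cofinite] with k hk s hs
  obtain ⟨hkL, one_le_k⟩ := max_le_iff.mp (not_lt.mp (Set.notMem_ofPred_iff.mp hk))
  rw [mem_ball_iff_norm] at hs
  have norm_s_le : ‖s‖ ≤ ‖s₀‖ + (s₀.re - σ) := by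
    linarith [norm_le_norm_add_norm_sub' s s₀]
  have σ_le : σ ≤ s.re := by
    have := (Complex.abs_re_le_norm (s - s₀)).trans hs.le
    rw [Complex.sub_re] at this
    linarith [neg_le_of_abs_le this]
  calc ‖(Δ_[u])^[N] (summand P s) k‖
      ≤ C * (Real.exp ‖s‖ * znorm k ^ (P.totalDegree - s.re - N)) :=
        norm_fwdDiff_iter_summand_le le_rfl hkL
    _ ≤ C * (Real.exp (‖s₀‖ + (s₀.re - σ)) * znorm k ^ (P.totalDegree - σ - N)) := by
        have := znorm_nonneg k
        gcongr
    _ = _ := by ring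

end SummandDifferences

section LatticeCharacters

open FourierTransform

variable {n : ℕ} {a : Fin n → ℝ}

/-- The character `k ↦ e^{2πi k·a}` of `ℤⁿ`. -/
def latticeChar (a : Fin n → ℝ) : AddChar (Fin n → ℤ) ℂ where
  toFun k := 𝐞 (∑ i, k i * a i)
  map_zero_eq_one' := by simp
  map_add_eq_mul' k l := by simp [add_mul, Finset.sum_add_distrib, AddChar.map_add_eq_mul]

theorem latticeChar_apply (k : Fin n → ℤ) : latticeChar a k = 𝐞 (∑ i, k i * a i) := rfl

theorem norm_latticeChar (k : Fin n → ℤ) : ‖latticeChar a k‖ = 1 := Circle.norm_coe _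

theorem summand_mul_latticeChar (P : MvPolynomial (Fin n) ℂ) (s : ℂ) (k : Fin n → ℤ) :
    summand P s k * latticeChar a k = fTerm P a s k := by
  rw [summand, fTerm, ite_mul, zero_mul, latticeChar_apply, Real.fourierChar_apply]
  congr 3
  push_cast
  ring

theorem four_mul_abs_sub_round_le_norm_fourierChar_sub_one (x : ℝ) :
    4 * |x - round x| ≤ ‖(𝐞 x : ℂ) - 1‖ := by
  set y := x - round x
  have fourierChar_round : (𝐞 (round x : ℝ) : ℂ) = 1 := by
    rw [Real.fourierChar_apply, Complex.exp_eq_one_iff]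
    exact ⟨round x, by push_cast; ring⟩
  have fourierChar_eq : (𝐞 x : ℂ) = Complex.exp (Complex.I * (2 * (Real.pi * y) : ℝ)) := by
    rw [← add_sub_cancel (round x : ℝ) x, AddChar.map_add_eq_mul, Circle.coe_mul,
      fourierChar_round, one_mul, Real.fourierChar_apply, mul_comm, mul_assoc]
  have abs_pi_mul : |Real.pi * y| = Real.pi * |y| := by
    rw [abs_mul, abs_of_pos Real.pi_pos]
  calc 4 * |y| = 2 * (2 / Real.pi * |Real.pi * y|) := by
        rw [abs_pi_mul]
        field_simp
        ring
    _ ≤ 2 * |Real.sin (Real.pi * y)| := by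
        gcongr
        refine Real.mul_abs_le_abs_sin ?_
        rw [abs_pi_mul]
        nlinarith [Real.pi_pos, abs_sub_round x]
    _ = ‖(𝐞 x : ℂ) - 1‖ := by
        rw [fourierChar_eq, Complex.norm_exp_I_mul_ofReal_sub_one,
          mul_div_cancel_left₀ _ two_ne_zero, norm_mul, Real.norm_two, Real.norm_eq_abs]

theorem IsDiophantineMatrix.exists_norm_inv_latticeChar_sub_one_le
    {Θ : Matrix (Fin n) (Fin n) ℝ} (hΘ : IsDiophantineMatrix Θ) :
    ∃ (u : Fin n → ℤ) (δ C : ℝ), 0 < δ ∧ ∀ m : Fin n → ℤ, m ≠ 0 →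
      latticeChar (Θ.mulVec fun j ↦ (m j : ℝ)) (-u) ≠ 1 ∧
      ‖latticeChar (Θ.mulVec fun j ↦ (m j : ℝ)) (-u) - 1‖⁻¹ ≤ C * znorm m ^ δ := by
  obtain ⟨u, δ, hδ, c, hc, hu⟩ := hΘ
  refine ⟨u, δ, (4 * c)⁻¹, hδ, fun m hm ↦ ?_⟩
  set χ := latticeChar (Θ.mulVec fun j ↦ (m j : ℝ))
  set x := ∑ i, (m i : ℝ) * (Θ.transpose.mulVec fun i ↦ (u i : ℝ)) i with x_def
  have χ_neg_u : χ (-u) = 𝐞 (-x) := by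
    have dot_eq := Matrix.dotProduct_mulVec (fun i ↦ (u i : ℝ)) Θ fun i ↦ (m i : ℝ)
    rw [← Matrix.mulVec_transpose, dotProduct_comm (Matrix.mulVec _ _)] at dot_eq
    simp only [χ, latticeChar_apply, Pi.neg_apply, Int.cast_neg, neg_mul, Finset.sum_neg_distrib]
    rw [x_def, ← dotProduct, ← dotProduct, dot_eq]
  have znorm_pos : 0 < znorm m := one_pos.trans_le (one_le_znorm hm)
  have lower_bound : 4 * c * znorm m ^ (-δ) ≤ ‖χ (-u) - 1‖ :=
    calc 4 * c * znorm m ^ (-δ) ≤ 4 * |x - (-round (-x) : ℤ)| := by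
          rw [mul_assoc]
          gcongr
          exact hu m hm _
      _ = 4 * |-x - round (-x)| := by
          rw [← abs_neg]
          push_cast
          ring_nf
      _ ≤ ‖χ (-u) - 1‖ := by
          rw [χ_neg_u]
          exact four_mul_abs_sub_round_le_norm_fourierChar_sub_one _
  have lower_bound_pos : 0 < 4 * c * znorm m ^ (-δ) := by positivity
  refine ⟨sub_ne_zero.mp (norm_pos_iff.mp (lower_bound_pos.trans_le lower_bound)), ?_⟩
  calc ‖χ (-u) - 1‖⁻¹ ≤ (4 * c * znorm m ^ (-δ))⁻¹ := inv_anti₀ lower_bound_pos lower_bound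
    _ = (4 * c)⁻¹ * znorm m ^ δ := by rw [mul_inv, Real.rpow_neg znorm_pos.le, inv_inv]

end LatticeCharacters

section TwistedSums

open fwdDiff Metric

variable {n : ℕ}

/-- The twisted sum `∑ₖ (Δᵤᴺ P(k)|k|⁻ˢ) e^{2πi k·a}` of the `N`-th forward differences along `u`;
for `N = 0` it is the series `f_a(s)`. -/
def twistedSum (P : MvPolynomial (Fin n) ℂ) (u : Fin n → ℤ) (N : ℕ) (a : Fin n → ℝ) (s : ℂ) : ℂ :=
  ∑' k, (Δ_[u])^[N] (summand P s) k * latticeChar a k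

variable {P : MvPolynomial (Fin n) ℂ} {u : Fin n → ℤ} {N : ℕ} {a : Fin n → ℝ} {s : ℂ}

theorem twistedSum_zero : twistedSum P u 0 a s = ∑' k, fTerm P a s k :=
  tsum_congr (summand_mul_latticeChar P s)

theorem twistedSum_succ (hs : P.totalDegree + n - N < s.re) :
    twistedSum P u (N + 1) a s = (latticeChar a (-u) - 1) * twistedSum P u N a s := by
  obtain ⟨r, hr, v, hv, hle⟩ := exists_summable_norm_fwdDiff_iter_summand_le P u N hs
  have summable_mul : Summable fun k ↦ (Δ_[u])^[N] (summand P s) k * latticeChar a k := by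
    refine hv.of_norm_bounded fun k ↦ ?_
    rw [norm_mul, norm_latticeChar, mul_one]
    exact hle k s (mem_ball_self hr)
  simp only [twistedSum, Function.iterate_succ_apply']
  exact tsum_fwdDiff_mul_addChar _ summable_mul u

theorem exists_differentiableOn_norm_twistedSum_le (P : MvPolynomial (Fin n) ℂ) (u : Fin n → ℤ)
    (N : ℕ) {s₀ : ℂ} (hs₀ : P.totalDegree + n - N < s₀.re) :
    ∃ r > 0, ∃ V, ∀ a, DifferentiableOn ℂ (twistedSum P u N a) (ball s₀ r) ∧
      ∀ s ∈ ball s₀ r, ‖twistedSum P u N a s‖ ≤ V := by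
  obtain ⟨r, hr, v, hv, hle⟩ := exists_summable_norm_fwdDiff_iter_summand_le P u N hs₀
  refine ⟨r, hr, ∑' k, v k, fun a ↦ ?_⟩
  have norm_le (k : Fin n → ℤ) (s : ℂ) (hs : s ∈ ball s₀ r) :
      ‖(Δ_[u])^[N] (summand P s) k * latticeChar a k‖ ≤ v k := by
    rw [norm_mul, norm_latticeChar, mul_one]
    exact hle k s hs
  exact ⟨Complex.differentiableOn_tsum_of_summable_norm hv
      (fun k ↦ ((differentiable_fwdDiff_iter_summand u N k).mul_const _).differentiableOn)
      isOpen_ball norm_le,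
    fun s hs ↦ tsum_of_norm_bounded hv.hasSum fun k ↦ norm_le k s hs⟩

end TwistedSums

section Families

variable {n : ℕ} {ι : Type*}

/-- The `N`-th expression for `∑ᵢ bᵢ f_{aᵢ}(s)` by `N` summations by parts along `u`: it converges
for `deg P + n - N < re s`, and successive ones agree where both converge. -/
def regularizedSum (P : MvPolynomial (Fin n) ℂ) (u : Fin n → ℤ) (b : ι → ℂ) (a : ι → Fin n → ℝ)
    (N : ℕ) (s : ℂ) : ℂ :=
  ∑' i, b i * (latticeChar (a i) (-u) - 1)⁻¹ ^ N * twistedSum P u N (a i) s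

variable {P : MvPolynomial (Fin n) ℂ} {u : Fin n → ℤ} {b : ι → ℂ} {a : ι → Fin n → ℝ} {N : ℕ}

theorem regularizedSum_zero (s : ℂ) :
    regularizedSum P u b a 0 s = ∑' i, b i * ∑' k, fTerm P (a i) s k := by
  simp only [regularizedSum, pow_zero, mul_one, twistedSum_zero]

theorem regularizedSum_succ (ha : ∀ i, latticeChar (a i) (-u) ≠ 1) {s : ℂ}
    (hs : P.totalDegree + n - N < s.re) :
    regularizedSum P u b a (N + 1) s = regularizedSum P u b a N s := by
  refine tsum_congr fun i ↦ ?_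
  have := sub_ne_zero.mpr (ha i)
  rw [twistedSum_succ hs, pow_succ]
  field_simp

theorem differentiableOn_regularizedSum
    (hb : Summable fun i ↦ ‖b i‖ * ‖latticeChar (a i) (-u) - 1‖⁻¹ ^ N) :
    DifferentiableOn ℂ (regularizedSum P u b a N) {s | P.totalDegree + n - N < s.re} := by
  intro s₀ hs₀
  obtain ⟨r, hr, V, hV⟩ := exists_differentiableOn_norm_twistedSum_le P u N hs₀
  refine DifferentiableAt.differentiableWithinAt
    (DifferentiableOn.differentiableAt ?_ (Metric.ball_mem_nhds s₀ hr))
  refine Complex.differentiableOn_tsum_of_summable_norm (hb.mul_right V)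
    (fun i ↦ (hV (a i)).1.const_mul _) Metric.isOpen_ball fun i s hs ↦ ?_
  rw [norm_mul, norm_mul, norm_pow, norm_inv]
  gcongr
  exact (hV (a i)).2 s hs

theorem exists_differentiable_eq_tsum_mul_tsum_fTerm (P : MvPolynomial (Fin n) ℂ)
    (ha : ∀ i, latticeChar (a i) (-u) ≠ 1)
    (hb : ∀ N, Summable fun i ↦ ‖b i‖ * ‖latticeChar (a i) (-u) - 1‖⁻¹ ^ N) :
    ∃ g : ℂ → ℂ, Differentiable ℂ g ∧ ∀ s : ℂ, P.totalDegree + n < s.re →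
      g s = ∑' i, b i * ∑' k, fTerm P (a i) s k := by
  let U (N : ℕ) : Set ℂ := {s | P.totalDegree + n - N < s.re}
  have U_mono : Monotone U := fun N N' hN s (hs : P.totalDegree + n - N < s.re) ↦
    show P.totalDegree + n - N' < s.re by linarith [Nat.cast_le (α := ℝ).mpr hN]
  have U_open (N : ℕ) : IsOpen (U N) := isOpen_lt continuous_const Complex.continuous_re
  have U_cover : ⋃ N, U N = Set.univ := by
    refine Set.eq_univ_of_forall fun s ↦ Set.mem_iUnion.mpr ?_
    obtain ⟨N, hN⟩ := exists_nat_gt (P.totalDegree + n - s.re)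
    exact ⟨N, sub_lt_comm.mp hN⟩
  obtain ⟨g, hg, g_eqOn⟩ := exists_differentiable_eqOn_of_eqOn_succ U_mono U_open U_cover
    (fun N ↦ differentiableOn_regularizedSum (hb N)) fun N s hs ↦ regularizedSum_succ ha hs
  refine ⟨g, hg, fun s hs ↦ ?_⟩
  rw [g_eqOn 0 (show s ∈ U 0 by simpa [U] using hs), regularizedSum_zero]

end Families

section OffDiagonalSeries

variable {n q : ℕ}

theorem IsSchwartzSeq.summable_norm_mul_pow {κ : Type*} {b : (Fin q → Fin n → ℤ) → ℂ}
    (hb : IsSchwartzSeq b) (ε : Fin q → ℤ) {δ C : ℝ} (hδ : 0 ≤ δ) {φ : κ → Fin q → Fin n → ℤ}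
    (hφ : Function.Injective φ) {x : κ → ℝ} (hx_nonneg : ∀ i, 0 ≤ x i)
    (hx : ∀ i, x i ≤ C * znorm (∑ j, ε j • φ i j) ^ δ) (N : ℕ) :
    Summable fun i ↦ ‖b (φ i)‖ * x i ^ N := by
  have summable_rpow := hb.summable_norm_mul_znorm_rpow ε (r := δ * N) (by positivity)
  refine ((summable_rpow.comp_injective hφ).mul_left (C ^ N)).of_nonneg_of_le
    (fun i ↦ mul_nonneg (norm_nonneg _) (pow_nonneg (hx_nonneg i) N)) fun i ↦ ?_
  calc ‖b (φ i)‖ * x i ^ N ≤ ‖b (φ i)‖ * (C * znorm (∑ j, ε j • φ i j) ^ δ) ^ N := by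
        gcongr
        · exact hx_nonneg i
        · exact hx i
    _ = C ^ N * (‖b (φ i)‖ * znorm (∑ j, ε j • φ i j) ^ (δ * N)) := by
        rw [mul_pow, Real.rpow_mul_natCast (znorm_nonneg _)]
        ring

theorem series_fa_offdiag_entire_general (P : MvPolynomial (Fin n) ℂ)
    {b : (Fin q → Fin n → ℤ) → ℂ} (hb : IsSchwartzSeq b) (ε : Fin q → ℤ)
    {Θ : Matrix (Fin n) (Fin n) ℝ} (hΘ : IsDiophantineMatrix Θ) :
    ∃ g : ℂ → ℂ, Differentiable ℂ g ∧ ∀ s : ℂ, P.totalDegree + n < s.re →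
      g s = ∑' l : {l : Fin q → Fin n → ℤ // ∑ i, ε i • l i ≠ 0},
        b l.val * ∑' k : Fin n → ℤ,
          fTerm P (Θ.mulVec fun j ↦ ((∑ i, ε i • l.val i) j : ℝ)) s k := by
  obtain ⟨u, δ, C, hδ, hu⟩ := hΘ.exists_norm_inv_latticeChar_sub_one_le
  exact exists_differentiable_eq_tsum_mul_tsum_fTerm P (fun l ↦ (hu _ l.2).1)
    (hb.summable_norm_mul_pow ε hδ.le Subtype.val_injective
      (fun l ↦ inv_nonneg.mpr (norm_nonneg _)) fun l ↦ (hu _ l.2).2)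

end OffDiagonalSeries

/-- **Theorem.** Let `P` be homogeneous of degree `d`, `b ∈ 𝒮((ℤⁿ)^q)`,
`ε ∈ {−1,0,1}^q` and `Θ ∈ Mₙ(ℝ)` diophantine.  With
`𝒵 = {l : Σᵢ εᵢ lᵢ = 0}`, the function
`g₀(s) = Σ_{l∉𝒵} b(l) f_{Θ Σᵢ εᵢ lᵢ}(s)` extends holomorphically to all of `ℂ`. -/
theorem series_fa_offdiag_entire (n q : ℕ) (hn : 0 < n) (hq : 0 < q) (d : ℕ)
    (P : MvPolynomial (Fin n) ℂ) (hP : P.IsHomogeneous d)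
    (b : (Fin q → Fin n → ℤ) → ℂ) (hb : IsSchwartzSeq b)
    (ε : Fin q → ℤ) (hε : ∀ i, ε i = -1 ∨ ε i = 0 ∨ ε i = 1)
    (Θ : Matrix (Fin n) (Fin n) ℝ) (hΘ : IsDiophantineMatrix Θ) :
    ∃ g : ℂ → ℂ, Differentiable ℂ g ∧
      ∀ s : ℂ, (d : ℝ) + (n : ℝ) < s.re →
        g s = ∑' l : {l : Fin q → Fin n → ℤ // ∑ i, ε i • l i ≠ 0},
          b l.val * ∑' k : Fin n → ℤ,
            fTerm P (Θ.mulVec fun j => (((∑ i, ε i • l.val i) j : ℤ) : ℝ)) s k := by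
  obtain ⟨g, hg, hgs⟩ := series_fa_offdiag_entire_general P hb ε hΘ
  exact ⟨g, hg, fun s hs ↦ hgs s (hs.trans_le' (by gcongr; exact hP.totalDegree_le))⟩

end
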